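/- arXiv:2010.11814 — 2 statements merged into one kernel-verified Lean document; each statement's English description precedes it below -/
import Mathlib

section
/- Let X be a real normed linear space, let p ≥ 1, and let x, y ∈ X be nonzero with ‖x‖ ≠ ‖y‖. Then α_p[x,y] ≤ ‖x‖^p + ‖y‖^p − (‖x‖+‖y‖−‖x−y‖)·(min{‖x‖,‖y‖})^{p−1} ≤ ((‖y‖^p − ‖x‖^p)/(‖y‖ − ‖x‖))·‖x−y‖; in particular the refined bound is more accurate than the Hile bound. -/
noncomputable def alphaD {X : Type*} [NormedAddCommGroup X] [NormedSpace ℝ X]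
    (p : ℝ) (x y : X) : ℝ :=
  ‖(‖x‖ ^ (p - 1)) • x - (‖y‖ ^ (p - 1)) • y‖

/-!
Let `s < t` be the norms of `x` and `y` in increasing order, and put `d = ‖x - y‖`. Since
`s ^ p = s ^ (p - 1) * s`, the refined bound equals
`s ^ (p - 1) * d + (t ^ (p - 1) - s ^ (p - 1)) * t`, which is what the triangle inequality gives
when the change of scalar is separated from the change of vector. The Hile bound is the same
expression with the second summand multiplied by `d / (t - s) ≥ 1`.
-/

theorem norm_smul_sub_smul_le {𝕜 E : Type*} [SeminormedRing 𝕜] [SeminormedAddCommGroup E]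
    [Module 𝕜 E] [IsBoundedSMul 𝕜 E] (a b : 𝕜) (x y : E) :
    ‖a • x - b • y‖ ≤ ‖a‖ * ‖x - y‖ + ‖b - a‖ * ‖y‖ :=
  calc
    ‖a • x - b • y‖ = ‖a • (x - y) - (b - a) • y‖ := by
      rw [smul_sub, sub_smul, sub_sub_sub_cancel_right]
    _ ≤ ‖a • (x - y)‖ + ‖(b - a) • y‖ := norm_sub_le _ _
    _ ≤ ‖a‖ * ‖x - y‖ + ‖b - a‖ * ‖y‖ := add_le_add (norm_smul_le _ _) (norm_smul_le _ _)

theorem rpow_sub_one_mul_self {p : ℝ} (hp : p ≠ 0) (x : ℝ) : x ^ (p - 1) * x = x ^ p := by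
  rcases eq_or_ne x 0 with rfl | hx
  · simp [Real.zero_rpow hp]
  · rw [Real.rpow_sub_one hx, div_mul_cancel₀ _ hx]

theorem rpow_add_rpow_sub_mul_rpow_sub_one {p : ℝ} (hp : p ≠ 0) (s t d : ℝ) :
    s ^ p + t ^ p - (s + t - d) * s ^ (p - 1) =
      s ^ (p - 1) * d + (t ^ (p - 1) - s ^ (p - 1)) * t := by
  rw [← rpow_sub_one_mul_self hp s, ← rpow_sub_one_mul_self hp t]
  ring

theorem rpow_sub_rpow_div_sub {p s t : ℝ} (hp : p ≠ 0) (hst : s ≠ t) :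
    (t ^ p - s ^ p) / (t - s) =
      s ^ (p - 1) + (t ^ (p - 1) - s ^ (p - 1)) * t / (t - s) := by
  have hts : t - s ≠ 0 := sub_ne_zero.mpr hst.symm
  rw [← rpow_sub_one_mul_self hp s, ← rpow_sub_one_mul_self hp t]
  field_simp
  ring

theorem rpow_add_rpow_sub_le_secant_mul {p s t d : ℝ} (hp : 1 ≤ p) (hs : 0 ≤ s) (ht : 0 ≤ t)
    (hst : s ≠ t) (hd : |s - t| ≤ d) :
    s ^ p + t ^ p - (s + t - d) * min s t ^ (p - 1) ≤ (t ^ p - s ^ p) / (t - s) * d := by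
  wlog hlt : s < t generalizing s t
  · have hswap := this ht hs hst.symm (abs_sub_comm s t ▸ hd) (hst.lt_of_le' (not_lt.mp hlt))
    rwa [add_comm (t ^ p), add_comm t, min_comm, ← neg_sub (t ^ p), ← neg_sub t,
      neg_div_neg_eq] at hswap
  have hp₀ : p ≠ 0 := by positivity
  have hpow : s ^ (p - 1) ≤ t ^ (p - 1) := Real.rpow_le_rpow hs hlt.le (sub_nonneg.mpr hp)
  have hgap : 0 < t - s := sub_pos.mpr hlt
  have hratio : 1 ≤ d / (t - s) := by
    rw [one_le_div hgap, ← neg_sub s t]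
    exact (neg_le_abs _).trans hd
  calc
    s ^ p + t ^ p - (s + t - d) * min s t ^ (p - 1)
      = s ^ (p - 1) * d + (t ^ (p - 1) - s ^ (p - 1)) * t := by
        rw [min_eq_left hlt.le, rpow_add_rpow_sub_mul_rpow_sub_one hp₀]
    _ ≤ s ^ (p - 1) * d + (t ^ (p - 1) - s ^ (p - 1)) * t * (d / (t - s)) := by
        have hslack : 0 ≤ (t ^ (p - 1) - s ^ (p - 1)) * t := mul_nonneg (sub_nonneg.mpr hpow) ht
        exact add_le_add_right (le_mul_of_one_le_right hslack hratio) _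
    _ = (t ^ p - s ^ p) / (t - s) * d := by
        rw [rpow_sub_rpow_div_sub hp₀ hst]
        ring

section alphaD

variable {X : Type*} [NormedAddCommGroup X] [NormedSpace ℝ X]

theorem alphaD_comm (p : ℝ) (x y : X) : alphaD p x y = alphaD p y x :=
  norm_sub_rev _ _

theorem alphaD_le_rpow_add_rpow_sub {p : ℝ} (hp : 1 ≤ p) (x y : X) :
    alphaD p x y
      ≤ ‖x‖ ^ p + ‖y‖ ^ p - (‖x‖ + ‖y‖ - ‖x - y‖) * (min ‖x‖ ‖y‖) ^ (p - 1) := by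
  wlog hle : ‖x‖ ≤ ‖y‖ generalizing x y
  · have hswap := this y x (le_of_not_ge hle)
    rwa [alphaD_comm, add_comm (‖y‖ ^ p), add_comm ‖y‖, norm_sub_rev, min_comm] at hswap
  have hp₀ : p ≠ 0 := by positivity
  have hpow : ‖x‖ ^ (p - 1) ≤ ‖y‖ ^ (p - 1) :=
    Real.rpow_le_rpow (norm_nonneg x) hle (sub_nonneg.mpr hp)
  calc
    alphaD p x y
      ≤ ‖‖x‖ ^ (p - 1)‖ * ‖x - y‖ + ‖‖y‖ ^ (p - 1) - ‖x‖ ^ (p - 1)‖ * ‖y‖ :=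
        norm_smul_sub_smul_le _ _ x y
    _ = ‖x‖ ^ (p - 1) * ‖x - y‖ + (‖y‖ ^ (p - 1) - ‖x‖ ^ (p - 1)) * ‖y‖ := by
        rw [Real.norm_of_nonneg (by positivity), Real.norm_of_nonneg (sub_nonneg.mpr hpow)]
    _ = ‖x‖ ^ p + ‖y‖ ^ p - (‖x‖ + ‖y‖ - ‖x - y‖) * (min ‖x‖ ‖y‖) ^ (p - 1) := by
        rw [min_eq_left hle, rpow_add_rpow_sub_mul_rpow_sub_one hp₀]

end alphaD

theorem refined_bound_vs_hile
    {X : Type*} [NormedAddCommGroup X] [NormedSpace ℝ X]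
    (p : ℝ) (hp : 1 ≤ p) (x y : X) (hx : x ≠ 0) (hy : y ≠ 0)
    (hxy : ‖x‖ ≠ ‖y‖) :
    alphaD p x y
        ≤ ‖x‖ ^ p + ‖y‖ ^ p - (‖x‖ + ‖y‖ - ‖x - y‖) * (min ‖x‖ ‖y‖) ^ (p - 1) ∧
      ‖x‖ ^ p + ‖y‖ ^ p - (‖x‖ + ‖y‖ - ‖x - y‖) * (min ‖x‖ ‖y‖) ^ (p - 1)
        ≤ ((‖y‖ ^ p - ‖x‖ ^ p) / (‖y‖ - ‖x‖)) * ‖x - y‖ :=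
  ⟨alphaD_le_rpow_add_rpow_sub hp x y,
    rpow_add_rpow_sub_le_secant_mul hp (norm_nonneg x) (norm_nonneg y) hxy
      (abs_norm_sub_norm_le x y)⟩
end

section
/- Let X be a real normed linear space and let x, y ∈ X be nonzero. If p ≤ 1, then ‖x‖·‖y‖^{p−1} + ‖x‖^{p−1}·‖y‖ − (‖x‖+‖y‖−‖x−y‖)/(min{‖x‖,‖y‖})^{1−p} ≤ β_p[x,y] ≤ ‖x‖·‖y‖^{p−1} + ‖x‖^{p−1}·‖y‖ − (‖x‖+‖y‖−‖x−y‖)/(max{‖x‖,‖y‖})^{1−p}. If p > 1, these two inequalities hold with reversed inequality signs. -/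
noncomputable def betaD {X : Type*} [NormedAddCommGroup X] [NormedSpace ℝ X]
    (p : ℝ) (x y : X) : ℝ :=
  ‖(‖y‖ ^ (p - 1)) • x - (‖x‖ ^ (p - 1)) • y‖

/-!
The identity `a • x - b • y = c • (x - y) + (a - c) • x - (b - c) • y` and the triangle inequality
bound `‖a • x - b • y‖` from above when `c = min a b`. Solved for `c • (x - y)`, the same identity
bounds it from below when `c = max a b`. For the weights `‖y‖ ^ (p - 1)` and `‖x‖ ^ (p - 1)`, the
sign of `p - 1` decides which of `min ‖x‖ ‖y‖` and `max ‖x‖ ‖y‖` gives the smaller weight.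
-/

section WeightedDifference

variable {X : Type*} [SeminormedAddCommGroup X] [NormedSpace ℝ X] (x y : X) {a b : ℝ}

theorem norm_smul_sub_smul_le_s11 (ha : 0 ≤ a) (hb : 0 ≤ b) :
    ‖a • x - b • y‖ ≤ a * ‖x‖ + b * ‖y‖ - (‖x‖ + ‖y‖ - ‖x - y‖) * min a b := by
  set c := min a b
  have hc : 0 ≤ c := le_min ha hb
  have hca : 0 ≤ a - c := sub_nonneg.mpr (min_le_left a b)
  have hcb : 0 ≤ b - c := sub_nonneg.mpr (min_le_right a b)
  calc ‖a • x - b • y‖ = ‖c • (x - y) + (a - c) • x - (b - c) • y‖ := by congr 1; module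
    _ ≤ ‖c • (x - y)‖ + ‖(a - c) • x‖ + ‖(b - c) • y‖ :=
      (norm_sub_le _ _).trans (by gcongr; exact norm_add_le _ _)
    _ = c * ‖x - y‖ + (a - c) * ‖x‖ + (b - c) * ‖y‖ := by
      simp only [norm_smul_of_nonneg, hc, hca, hcb]
    _ = a * ‖x‖ + b * ‖y‖ - (‖x‖ + ‖y‖ - ‖x - y‖) * c := by ring

variable (a b) in
theorem le_norm_smul_sub_smul :
    a * ‖x‖ + b * ‖y‖ - (‖x‖ + ‖y‖ - ‖x - y‖) * max a b ≤ ‖a • x - b • y‖ := by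
  set c := max a b
  have hac : 0 ≤ c - a := sub_nonneg.mpr (le_max_left a b)
  have hbc : 0 ≤ c - b := sub_nonneg.mpr (le_max_right a b)
  have triangle : c * ‖x - y‖ ≤ ‖a • x - b • y‖ + (c - a) * ‖x‖ + (c - b) * ‖y‖ :=
    calc c * ‖x - y‖ ≤ ‖c • (x - y)‖ := by
          rw [norm_smul]
          gcongr
          exact Real.le_norm_self c
      _ = ‖(a • x - b • y) + (c - a) • x - (c - b) • y‖ := by congr 1; module
      _ ≤ ‖a • x - b • y‖ + ‖(c - a) • x‖ + ‖(c - b) • y‖ :=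
        (norm_sub_le _ _).trans (by gcongr; exact norm_add_le _ _)
      _ = ‖a • x - b • y‖ + (c - a) * ‖x‖ + (c - b) * ‖y‖ := by
        simp only [norm_smul_of_nonneg, hac, hbc]
  linarith

end WeightedDifference

section SkewAngularDistance

variable {X : Type*} [NormedAddCommGroup X] [NormedSpace ℝ X] (p : ℝ) (x y : X)

theorem betaD_le :
    betaD p x y ≤ ‖x‖ * ‖y‖ ^ (p - 1) + ‖x‖ ^ (p - 1) * ‖y‖
      - (‖x‖ + ‖y‖ - ‖x - y‖) * min (‖x‖ ^ (p - 1)) (‖y‖ ^ (p - 1)) := by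
  rw [mul_comm ‖x‖, min_comm]
  exact norm_smul_sub_smul_le_s11 x y (by positivity) (by positivity)

theorem le_betaD :
    ‖x‖ * ‖y‖ ^ (p - 1) + ‖x‖ ^ (p - 1) * ‖y‖
      - (‖x‖ + ‖y‖ - ‖x - y‖) * max (‖x‖ ^ (p - 1)) (‖y‖ ^ (p - 1)) ≤ betaD p x y := by
  rw [mul_comm ‖x‖, max_comm]
  exact le_norm_smul_sub_smul x y _ _

end SkewAngularDistance

theorem div_rpow_one_sub {t : ℝ} (ht : 0 ≤ t) (d p : ℝ) :
    d / t ^ (1 - p) = d * t ^ (p - 1) := by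
  rw [div_eq_mul_inv, ← Real.rpow_neg ht, neg_sub]

theorem skew_pAngular_bounds
    {X : Type*} [NormedAddCommGroup X] [NormedSpace ℝ X]
    (x y : X) (hx : x ≠ 0) (hy : y ≠ 0) (p : ℝ) :
    (p ≤ 1 →
      ‖x‖ * ‖y‖ ^ (p - 1) + ‖x‖ ^ (p - 1) * ‖y‖
          - (‖x‖ + ‖y‖ - ‖x - y‖) / (min ‖x‖ ‖y‖) ^ (1 - p)
        ≤ betaD p x y ∧
      betaD p x y
        ≤ ‖x‖ * ‖y‖ ^ (p - 1) + ‖x‖ ^ (p - 1) * ‖y‖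
          - (‖x‖ + ‖y‖ - ‖x - y‖) / (max ‖x‖ ‖y‖) ^ (1 - p)) ∧
    (1 < p →
      betaD p x y
        ≤ ‖x‖ * ‖y‖ ^ (p - 1) + ‖x‖ ^ (p - 1) * ‖y‖
          - (‖x‖ + ‖y‖ - ‖x - y‖) / (min ‖x‖ ‖y‖) ^ (1 - p) ∧
      ‖x‖ * ‖y‖ ^ (p - 1) + ‖x‖ ^ (p - 1) * ‖y‖
          - (‖x‖ + ‖y‖ - ‖x - y‖) / (max ‖x‖ ‖y‖) ^ (1 - p)
        ≤ betaD p x y) := by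
  have hx_pos : ‖x‖ ∈ Set.Ioi 0 := norm_pos_iff.mpr hx
  have hy_pos : ‖y‖ ∈ Set.Ioi 0 := norm_pos_iff.mpr hy
  rw [div_rpow_one_sub (by positivity), div_rpow_one_sub (by positivity)]
  refine ⟨fun hp ↦ ?_, fun hp ↦ ?_⟩
  · have anti : AntitoneOn (fun t : ℝ ↦ t ^ (p - 1)) (Set.Ioi 0) :=
      Real.antitoneOn_rpow_Ioi_of_exponent_nonpos (sub_nonpos.mpr hp)
    rw [anti.map_min hx_pos hy_pos, anti.map_max hx_pos hy_pos]
    exact ⟨le_betaD p x y, betaD_le p x y⟩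
  · have mono : MonotoneOn (fun t : ℝ ↦ t ^ (p - 1)) (Set.Ici 0) :=
      Real.monotoneOn_rpow_Ici_of_exponent_nonneg (sub_nonneg.mpr hp.le)
    have hx_nonneg := Set.Ioi_subset_Ici_self hx_pos
    have hy_nonneg := Set.Ioi_subset_Ici_self hy_pos
    rw [mono.map_min hx_nonneg hy_nonneg, mono.map_max hx_nonneg hy_nonneg]
    exact ⟨betaD_le p x y, le_betaD p x y⟩
end
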